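/- arXiv:2211.04080 — 2 statements merged into one kernel-verified Lean document; each statement's English description precedes it below -/
import Mathlib

section
/- In a commutative quasi-Banach algebra A, an element x is invertible if and only if h(x) ≠ 0 for every complex homomorphism h : A → ℂ; equivalently, λ ∈ σ(x) if and only if h(x) = λ for some complex homomorphism h. -/
/-- A quasi-Banach algebra structure on a complete metric ring `A`: the quasi-norm `N`
is a `q`-norm (`0 < q ≤ 1`), is multiplicative up to the constant `C_P ≥ 1`,
`‖e‖ = 1`, and the metric is induced by `N (x - y) ^ q`. -/
class QuasiBanachAlgebra (A : Type*) [Ring A] [Algebra ℂ A] [MetricSpace A] [CompleteSpace A]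
    (N : A → ℝ) (q Cp : ℝ) : Prop where
  q_pos : 0 < q
  q_le_one : q ≤ 1
  one_le_Cp : 1 ≤ Cp
  nonneg : ∀ x, 0 ≤ N x
  eq_zero_iff : ∀ x, N x = 0 ↔ x = 0
  smul_eq : ∀ (c : ℂ) (x : A), N (c • x) = ‖c‖ * N x
  add_pow_le : ∀ x y, N (x + y) ^ q ≤ N x ^ q + N y ^ q
  mul_le : ∀ x y, N (x * y) ≤ Cp * N x * N y
  norm_one : N 1 = 1
  dist_eq : ∀ x y, dist x y = N (x - y) ^ q

/-! The `n`-th root growth rate of `N (x ^ n)` is a submultiplicative *seminorm* `r`, although `N`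
itself satisfies no triangle inequality: in the binomial expansion of `(x + y) ^ n` the `q`-norm
inequality costs only the factor `(n + 1) ^ q⁻¹`, which disappears in the growth rate. The geometric
series converges where `r y < 1`, so passing to the Banach algebra completion of `(A, r)` creates no
new invertible elements, and the characters provided there by the classical Gelfand theorem restrict
to `A`. -/

open Filter Topology Finset UniformSpace

section LinearMap

variable {R A B : Type*} [CommSemiring R] [Semiring A] [Algebra R A] [Semiring B] [IsDomain B]
  [Algebra R B]

theorem map_one_of_map_mul {φ : A →ₗ[R] B} (hmul : ∀ a b, φ (a * b) = φ a * φ b) (hφ : φ ≠ 0) :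
    φ 1 = 1 := by
  have hidem : IsIdempotentElem (φ 1) := by rw [IsIdempotentElem, ← hmul, one_mul]
  refine (IsIdempotentElem.iff_eq_zero_or_one.1 hidem).resolve_left fun h0 => hφ ?_
  ext a
  rw [← one_mul a, hmul, h0, zero_mul, LinearMap.zero_apply]

theorem exists_algHom_apply_eq_iff {x : A} {z : B} :
    (∃ φ : A →ₐ[R] B, φ x = z) ↔
      ∃ φ : A →ₗ[R] B, (∀ a b, φ (a * b) = φ a * φ b) ∧ φ ≠ 0 ∧ φ x = z := by
  constructor
  · rintro ⟨φ, hφ⟩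
    refine ⟨φ.toLinearMap, map_mul φ, fun h0 => ?_, hφ⟩
    simpa using DFunLike.congr_fun h0 1
  · rintro ⟨φ, hmul, hne, hφ⟩
    exact ⟨AlgHom.ofLinearMap φ (map_one_of_map_mul hmul hne) hmul, hφ⟩

end LinearMap

theorem isUnit_of_isUnit_coe_completion {R : Type*} [SeminormedRing R]
    (hunit : ∀ y : R, ‖y‖ < 1 → IsUnit (1 - y)) {x : R} (hx : IsUnit (x : Completion R)) :
    IsUnit x := by
  obtain ⟨b, hxb, hbx⟩ := isUnit_iff_exists.1 hx
  have hopen : IsOpen {z : Completion R | ‖1 - x * z‖ < 1 ∧ ‖1 - z * x‖ < 1} :=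
    (isOpen_lt (by fun_prop) continuous_const).and (isOpen_lt (by fun_prop) continuous_const)
  obtain ⟨y, hxy, hyx⟩ := Completion.denseRange_coe.exists_mem_open hopen
    ⟨b, by simp [hxb], by simp [hbx]⟩
  norm_cast at hxy hyx
  rw [Completion.norm_coe] at hxy hyx
  have hright : IsUnit (x * y) := by simpa using hunit _ hxy
  have hleft : IsUnit (y * x) := by simpa using hunit _ hyx
  obtain ⟨c, hc⟩ := hright.exists_right_inv
  obtain ⟨d, hd⟩ := hleft.exists_left_inv
  exact isUnit_iff_exists_and_exists.2
    ⟨⟨y * c, by rw [← mul_assoc, hc]⟩, ⟨d * y, by rw [mul_assoc, hd]⟩⟩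

theorem exists_algHom_apply_eq_zero_of_forall_isUnit_one_sub {R : Type*} [SeminormedCommRing R]
    [NormedAlgebra ℂ R] (hunit : ∀ y : R, ‖y‖ < 1 → IsUnit (1 - y)) {x : R} (hx : ¬IsUnit x) :
    ∃ φ : R →ₐ[ℂ] ℂ, φ x = 0 := by
  obtain ⟨f, hf⟩ := WeakDual.CharacterSpace.exists_apply_eq_zero
    (mt (isUnit_of_isUnit_coe_completion hunit) hx)
  exact ⟨(WeakDual.CharacterSpace.toAlgHom f).comp
    (IsScalarTower.toAlgHom ℂ R (Completion R)), hf⟩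

theorem exists_algHom_apply_eq_zero_of_ringSeminorm {R : Type*} [CommRing R] [Algebra ℂ R]
    (p : RingSeminorm R) (hsmul : ∀ (c : ℂ) (y : R), p (c • y) ≤ ‖c‖ * p y)
    (hunit : ∀ y, p y < 1 → IsUnit (1 - y)) {x : R} (hx : ¬IsUnit x) :
    ∃ φ : R →ₐ[ℂ] ℂ, φ x = 0 := by
  let : SeminormedCommRing R := { p.toSeminormedRing with mul_comm := mul_comm }
  let : NormedAlgebra ℂ R := { ‹Algebra ℂ R› with norm_smul_le := hsmul }
  exact exists_algHom_apply_eq_zero_of_forall_isUnit_one_sub hunit hx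

theorem isUnit_one_sub_of_summable_pow {R : Type*} [Ring R] [TopologicalSpace R]
    [IsTopologicalRing R] [T2Space R] {x : R} (hx : Summable (x ^ ·)) : IsUnit (1 - x) :=
  isUnit_iff_exists.2 ⟨_, hx.one_sub_mul_tsum_pow, hx.tsum_pow_mul_one_sub⟩

theorem exists_forall_natCast_add_one_rpow_mul_pow_le (a : ℝ) {r w : ℝ} (hr : 0 ≤ r)
    (hrw : r < w) : ∃ E ≥ 0, ∀ n : ℕ, ((n : ℝ) + 1) ^ a * r ^ n ≤ E * w ^ n := by
  have hw : 0 < w := hr.trans_lt hrw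
  obtain ⟨k, hk⟩ := exists_nat_ge a
  have hshift : (fun n : ℕ => (n : ℝ) + 1) =O[atTop] fun n : ℕ => (n : ℝ) :=
    (Asymptotics.isBigO_refl _ _).add <|
      (Asymptotics.isLittleO_const_id_atTop (1 : ℝ)).isBigO.comp_tendsto tendsto_natCast_atTop_atTop
  have hpoly : (fun n : ℕ => ((n : ℝ) + 1) ^ k * r ^ n) =O[atTop] fun n : ℕ => w ^ n :=
    ((hshift.pow k).mul (Asymptotics.isBigO_refl _ _)).trans
      (isLittleO_pow_const_mul_const_pow_const_pow_of_norm_lt k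
        (by rwa [Real.norm_of_nonneg hr])).isBigO
  obtain ⟨E, hE, hbound⟩ := Asymptotics.bound_of_isBigO_nat_atTop hpoly
  refine ⟨E, hE.le, fun n => ?_⟩
  calc ((n : ℝ) + 1) ^ a * r ^ n
      ≤ ((n : ℝ) + 1) ^ (k : ℝ) * r ^ n := by
        gcongr
        linarith [n.cast_nonneg (α := ℝ)]
    _ = ‖((n : ℝ) + 1) ^ k * r ^ n‖ := by
        rw [Real.rpow_natCast, Real.norm_of_nonneg (by positivity)]
    _ ≤ E * ‖w ^ n‖ := hbound (pow_pos hw n).ne'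
    _ = E * w ^ n := by rw [Real.norm_of_nonneg (by positivity)]

/-- `HasPowerGrowth N x t` says that `N (x ^ n)` grows at most like `t ^ n`. The rate `t = 0` is
allowed, so that `c • x` with `c = 0` is not a special case. -/
def HasPowerGrowth {A : Type*} [Monoid A] (N : A → ℝ) (x : A) (t : ℝ) : Prop :=
  0 ≤ t ∧ ∃ K ≥ 0, ∀ n : ℕ, N (x ^ n) ≤ K * t ^ n

/-- The spectral radius of `x` with respect to `N`, here defined as the infimum of the geometric
growth rates of `N (x ^ n)` rather than through the spectrum. -/
noncomputable def powerRadius {A : Type*} [Monoid A] (N : A → ℝ) (x : A) : ℝ :=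
  sInf {t | HasPowerGrowth N x t}

section Monoid

variable {A : Type*} [Monoid A] {N : A → ℝ} {x : A} {s t : ℝ}

theorem HasPowerGrowth.mono (h : HasPowerGrowth N x s) (hst : s ≤ t) : HasPowerGrowth N x t := by
  obtain ⟨hs, K, hK, hN⟩ := h
  refine ⟨hs.trans hst, K, hK, fun n => (hN n).trans ?_⟩
  gcongr

theorem powerRadius_nonneg (N : A → ℝ) (x : A) : 0 ≤ powerRadius N x :=
  Real.sInf_nonneg fun _ ht => ht.1

theorem HasPowerGrowth.powerRadius_le (h : HasPowerGrowth N x t) : powerRadius N x ≤ t :=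
  csInf_le ⟨0, fun _ ht => ht.1⟩ h

end Monoid

/-- `N` is a `q`-seminorm on the `𝕜`-algebra `A`, submultiplicative up to the constant `C`: the part
of the notion of a quasi-Banach algebra that involves neither the metric nor definiteness. -/
structure IsAlgebraQuasiSeminorm (𝕜 : Type*) {A : Type*} [NormedField 𝕜] [Ring A] [Algebra 𝕜 A]
    (N : A → ℝ) (q C : ℝ) : Prop where
  exponent_pos : 0 < q
  const_nonneg : 0 ≤ C
  nonneg : ∀ x, 0 ≤ N x
  map_smul : ∀ (c : 𝕜) (x : A), N (c • x) = ‖c‖ * N x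
  map_add_rpow_le : ∀ x y, N (x + y) ^ q ≤ N x ^ q + N y ^ q
  map_mul_le : ∀ x y, N (x * y) ≤ C * N x * N y

namespace IsAlgebraQuasiSeminorm

section Ring

variable {𝕜 A : Type*} [NormedField 𝕜] [Ring A] [Algebra 𝕜 A] {N : A → ℝ} {q C : ℝ} {x y : A}
  {s t : ℝ}

theorem map_zero (h : IsAlgebraQuasiSeminorm 𝕜 N q C) : N 0 = 0 := by
  simpa using h.map_smul 0 0

theorem map_nsmul_le (h : IsAlgebraQuasiSeminorm 𝕜 N q C) (k : ℕ) (x : A) :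
    N (k • x) ≤ k * N x := by
  rw [← Nat.cast_smul_eq_nsmul 𝕜, h.map_smul]
  have hx := h.nonneg x
  gcongr
  simpa using Nat.norm_cast_le (α := 𝕜) k

theorem map_pow_le (h : IsAlgebraQuasiSeminorm 𝕜 N q C) (x : A) (n : ℕ) :
    N (x ^ n) ≤ N 1 * (C * N x) ^ n := by
  have hC := h.const_nonneg
  have hx := h.nonneg x
  induction n with
  | zero => simp
  | succ n ih =>
    calc N (x ^ (n + 1)) ≤ C * N (x ^ n) * N x := by
          rw [pow_succ]
          exact h.map_mul_le _ _
      _ ≤ C * (N 1 * (C * N x) ^ n) * N x := by gcongr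
      _ = N 1 * (C * N x) ^ (n + 1) := by ring

theorem map_sum_le_card_rpow_mul (h : IsAlgebraQuasiSeminorm 𝕜 N q C) {ι : Type*} {S : Finset ι}
    {f : ι → A} {b : ℝ} (hb : 0 ≤ b) (hf : ∀ i ∈ S, N (f i) ≤ b) :
    N (∑ i ∈ S, f i) ≤ (#S : ℝ) ^ q⁻¹ * b := by
  have hq := h.exponent_pos
  rw [← Real.rpow_le_rpow_iff (h.nonneg _) (by positivity) hq]
  calc N (∑ i ∈ S, f i) ^ q
      ≤ ∑ i ∈ S, N (f i) ^ q :=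
        le_sum_of_subadditive (fun a => N a ^ q) (by simp [h.map_zero, hq.ne'])
          h.map_add_rpow_le S f
    _ ≤ ∑ _i ∈ S, b ^ q :=
        sum_le_sum fun i hi => Real.rpow_le_rpow (h.nonneg _) (hf i hi) hq.le
    _ = ((#S : ℝ) ^ q⁻¹ * b) ^ q := by
        rw [sum_const, nsmul_eq_mul, Real.mul_rpow (by positivity) hb,
          Real.rpow_inv_rpow (by positivity) hq.ne']

theorem map_add_pow_le (h : IsAlgebraQuasiSeminorm 𝕜 N q C) (hxy : Commute x y) {K L : ℝ}
    (hK : 0 ≤ K) (hL : 0 ≤ L) (hs : 0 ≤ s) (ht : 0 ≤ t) (hx : ∀ n : ℕ, N (x ^ n) ≤ K * s ^ n)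
    (hy : ∀ n : ℕ, N (y ^ n) ≤ L * t ^ n) (n : ℕ) :
    N ((x + y) ^ n) ≤ ((n : ℝ) + 1) ^ q⁻¹ * (C * K * L * (s + t) ^ n) := by
  have hC := h.const_nonneg
  have hterm : ∀ m ∈ antidiagonal n,
      N (n.choose m.1 • (x ^ m.1 * y ^ m.2)) ≤ C * K * L * (s + t) ^ n := fun m hm => by
    have hchoose : n.choose m.1 * (s ^ m.1 * t ^ m.2) ≤ (s + t) ^ n := by
      simp only [(Commute.all s t).add_pow', nsmul_eq_mul]
      exact single_le_sum (f := fun m : ℕ × ℕ => n.choose m.1 * (s ^ m.1 * t ^ m.2))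
        (fun _ _ => by positivity) hm
    have hy0 := h.nonneg (y ^ m.2)
    calc N (n.choose m.1 • (x ^ m.1 * y ^ m.2))
        ≤ n.choose m.1 * (C * N (x ^ m.1) * N (y ^ m.2)) :=
          (h.map_nsmul_le _ _).trans (by gcongr; exact h.map_mul_le _ _)
      _ ≤ n.choose m.1 * (C * (K * s ^ m.1) * (L * t ^ m.2)) := by
          gcongr
          exacts [hx _, hy _]
      _ = C * K * L * (n.choose m.1 * (s ^ m.1 * t ^ m.2)) := by ring
      _ ≤ C * K * L * (s + t) ^ n := by gcongr
  rw [hxy.add_pow']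
  simpa using h.map_sum_le_card_rpow_mul (by positivity) hterm

theorem hasPowerGrowth_const_mul (h : IsAlgebraQuasiSeminorm 𝕜 N q C) (x : A) :
    HasPowerGrowth N x (C * N x) :=
  ⟨mul_nonneg h.const_nonneg (h.nonneg x), N 1, h.nonneg 1, h.map_pow_le x⟩

theorem hasPowerGrowth_zero (h : IsAlgebraQuasiSeminorm 𝕜 N q C) : HasPowerGrowth N (0 : A) 0 := by
  simpa [h.map_zero] using h.hasPowerGrowth_const_mul 0

theorem hasPowerGrowth_smul (h : IsAlgebraQuasiSeminorm 𝕜 N q C) (c : 𝕜)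
    (hx : HasPowerGrowth N x t) : HasPowerGrowth N (c • x) (‖c‖ * t) := by
  obtain ⟨ht, K, hK, hN⟩ := hx
  refine ⟨by positivity, K, hK, fun n => ?_⟩
  rw [smul_pow, h.map_smul, norm_pow, mul_pow, mul_left_comm]
  gcongr
  exact hN n

theorem hasPowerGrowth_mul (h : IsAlgebraQuasiSeminorm 𝕜 N q C) (hxy : Commute x y)
    (hx : HasPowerGrowth N x s) (hy : HasPowerGrowth N y t) : HasPowerGrowth N (x * y) (s * t) := by
  obtain ⟨hs, K, hK, hxK⟩ := hx
  obtain ⟨ht, L, hL, hyL⟩ := hy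
  have hC := h.const_nonneg
  refine ⟨mul_nonneg hs ht, C * K * L, by positivity, fun n => ?_⟩
  have hy0 := h.nonneg (y ^ n)
  calc N ((x * y) ^ n) ≤ C * N (x ^ n) * N (y ^ n) := by
        rw [hxy.mul_pow]
        exact h.map_mul_le _ _
    _ ≤ C * (K * s ^ n) * (L * t ^ n) := by
        gcongr
        exacts [hxK n, hyL n]
    _ = C * K * L * (s * t) ^ n := by ring

theorem hasPowerGrowth_add (h : IsAlgebraQuasiSeminorm 𝕜 N q C) (hxy : Commute x y)
    (hx : HasPowerGrowth N x s) (hy : HasPowerGrowth N y t) {w : ℝ} (hw : s + t < w) :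
    HasPowerGrowth N (x + y) w := by
  obtain ⟨hs, K, hK, hxK⟩ := hx
  obtain ⟨ht, L, hL, hyL⟩ := hy
  have hst : 0 ≤ s + t := add_nonneg hs ht
  have hC := h.const_nonneg
  obtain ⟨E, hE, hEw⟩ := exists_forall_natCast_add_one_rpow_mul_pow_le q⁻¹ hst hw
  refine ⟨hst.trans hw.le, C * K * L * E, by positivity, fun n => ?_⟩
  calc N ((x + y) ^ n)
      ≤ ((n : ℝ) + 1) ^ q⁻¹ * (C * K * L * (s + t) ^ n) :=
        h.map_add_pow_le hxy hK hL hs ht hxK hyL n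
    _ = C * K * L * (((n : ℝ) + 1) ^ q⁻¹ * (s + t) ^ n) := by ring
    _ ≤ C * K * L * (E * w ^ n) :=
        mul_le_mul_of_nonneg_left (hEw n) (by positivity)
    _ = C * K * L * E * w ^ n := by ring

theorem hasPowerGrowth_of_powerRadius_lt (h : IsAlgebraQuasiSeminorm 𝕜 N q C)
    (ht : powerRadius N x < t) : HasPowerGrowth N x t := by
  have hne : {s | HasPowerGrowth N x s}.Nonempty := ⟨C * N x, h.hasPowerGrowth_const_mul x⟩
  obtain ⟨s, hs, hst⟩ := exists_lt_of_csInf_lt hne ht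
  exact hs.mono hst.le

theorem powerRadius_zero (h : IsAlgebraQuasiSeminorm 𝕜 N q C) : powerRadius N (0 : A) = 0 :=
  h.hasPowerGrowth_zero.powerRadius_le.antisymm (powerRadius_nonneg N 0)

theorem powerRadius_smul_le (h : IsAlgebraQuasiSeminorm 𝕜 N q C) (c : 𝕜) (x : A) :
    powerRadius N (c • x) ≤ ‖c‖ * powerRadius N x := by
  refine le_mul_of_forall_lt₀ fun a ha t ht => ?_
  have hx := h.hasPowerGrowth_of_powerRadius_lt ht
  exact (h.hasPowerGrowth_smul c hx).powerRadius_le.trans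
    (mul_le_mul_of_nonneg_right ha.le hx.1)

theorem powerRadius_neg (h : IsAlgebraQuasiSeminorm 𝕜 N q C) (x : A) :
    powerRadius N (-x) = powerRadius N x := by
  have hle : ∀ y : A, powerRadius N (-y) ≤ powerRadius N y := fun y => by
    simpa using h.powerRadius_smul_le (-1) y
  exact (hle x).antisymm (by simpa using hle (-x))

theorem powerRadius_add_le (h : IsAlgebraQuasiSeminorm 𝕜 N q C) (hxy : Commute x y) :
    powerRadius N (x + y) ≤ powerRadius N x + powerRadius N y :=
  le_add_of_forall_lt fun _ hs _ ht => le_of_forall_gt_imp_ge_of_dense fun _ hw =>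
    (h.hasPowerGrowth_add hxy (h.hasPowerGrowth_of_powerRadius_lt hs)
      (h.hasPowerGrowth_of_powerRadius_lt ht) hw).powerRadius_le

theorem powerRadius_mul_le (h : IsAlgebraQuasiSeminorm 𝕜 N q C) (hxy : Commute x y) :
    powerRadius N (x * y) ≤ powerRadius N x * powerRadius N y :=
  le_mul_of_forall_lt₀ fun _ hs _ ht =>
    (h.hasPowerGrowth_mul hxy (h.hasPowerGrowth_of_powerRadius_lt hs)
      (h.hasPowerGrowth_of_powerRadius_lt ht)).powerRadius_le

theorem summable_map_pow_rpow (h : IsAlgebraQuasiSeminorm 𝕜 N q C) (hx : powerRadius N x < 1) :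
    Summable fun n : ℕ => N (x ^ n) ^ q := by
  have hq := h.exponent_pos
  obtain ⟨t, hxt, ht1⟩ := exists_between hx
  obtain ⟨ht, K, hK, hN⟩ := h.hasPowerGrowth_of_powerRadius_lt hxt
  have hgeom : Summable fun n : ℕ => K ^ q * (t ^ q) ^ n :=
    (summable_geometric_of_lt_one (by positivity) (Real.rpow_lt_one ht ht1 hq)).mul_left _
  refine hgeom.of_nonneg_of_le (fun n => Real.rpow_nonneg (h.nonneg _) q) fun n => ?_
  rw [Real.rpow_pow_comm ht, ← Real.mul_rpow hK (by positivity)]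
  exact Real.rpow_le_rpow (h.nonneg _) (hN n) hq.le

end Ring

section CommRing

variable {𝕜 A : Type*} [NormedField 𝕜] [CommRing A] [Algebra 𝕜 A] {N : A → ℝ} {q C : ℝ}

/-- The spectral radius on a commutative algebra as a bundled submultiplicative seminorm. -/
noncomputable def powerRadiusSeminorm (h : IsAlgebraQuasiSeminorm 𝕜 N q C) : RingSeminorm A where
  toFun := powerRadius N
  map_zero' := h.powerRadius_zero
  neg' := h.powerRadius_neg
  add_le' x y := h.powerRadius_add_le (Commute.all x y)
  mul_le' x y := h.powerRadius_mul_le (Commute.all x y)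

end CommRing

end IsAlgebraQuasiSeminorm

namespace QuasiBanachAlgebra

section Ring

variable {A : Type*} [Ring A] [Algebra ℂ A] [MetricSpace A] [CompleteSpace A] {N : A → ℝ}
  {q Cp : ℝ}

theorem isAlgebraQuasiSeminorm (h : QuasiBanachAlgebra A N q Cp) :
    IsAlgebraQuasiSeminorm ℂ N q Cp where
  exponent_pos := h.q_pos
  const_nonneg := zero_le_one.trans h.one_le_Cp
  nonneg := h.nonneg
  map_smul := h.smul_eq
  map_add_rpow_le := h.add_pow_le
  map_mul_le := h.mul_le

/-- The additive group of a quasi-Banach algebra, normed by `N x ^ q` and not by `N x`, so that the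
given metric is the one induced by the norm. -/
noncomputable abbrev normedAddCommGroup (h : QuasiBanachAlgebra A N q Cp) :
    NormedAddCommGroup A where
  __ := ‹Ring A›
  __ := ‹MetricSpace A›
  norm x := N x ^ q
  dist_eq x y := by rw [dist_comm, h.dist_eq, neg_add_eq_sub]

theorem isTopologicalRing (h : QuasiBanachAlgebra A N q Cp) : IsTopologicalRing A := by
  let := h.normedAddCommGroup
  have hCp : 0 < Cp := zero_lt_one.trans_le h.one_le_Cp
  have hCpq : 0 < Cp ^ q := Real.rpow_pos_of_pos hCp q
  -- The factor `Cp ^ q` makes the norm `N x ^ q` submultiplicative.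
  refine IsTopologicalRing.of_norm (fun x : A => Cp ^ q * ‖x‖) (fun x => by positivity)
    (fun x y => ?_) (NormedAddGroup.nhds_zero_basis_norm_lt.to_hasBasis
      (fun ε hε => ⟨Cp ^ q * ε, by positivity, fun x hx => ?_⟩)
      (fun ε hε => ⟨ε / Cp ^ q, by positivity, fun x hx => ?_⟩))
  · calc Cp ^ q * N (x * y) ^ q
        ≤ Cp ^ q * (Cp * N x * N y) ^ q := by
          gcongr
          exacts [h.nonneg _, h.q_pos.le, h.mul_le x y]
      _ = Cp ^ q * N x ^ q * (Cp ^ q * N y ^ q) := by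
          rw [Real.mul_rpow (mul_nonneg hCp.le (h.nonneg x)) (h.nonneg y),
            Real.mul_rpow hCp.le (h.nonneg x)]
          ring
  · exact lt_of_mul_lt_mul_left hx hCpq.le
  · exact (lt_div_iff₀' hCpq).1 hx

theorem isUnit_one_sub (h : QuasiBanachAlgebra A N q Cp) {y : A} (hy : powerRadius N y < 1) :
    IsUnit (1 - y) := by
  let := h.normedAddCommGroup
  have := h.isTopologicalRing
  exact isUnit_one_sub_of_summable_pow
    (Summable.of_norm (h.isAlgebraQuasiSeminorm.summable_map_pow_rpow hy))

end Ring

theorem mem_spectrum_iff_exists_algHom {A : Type*} [CommRing A] [Algebra ℂ A] [MetricSpace A]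
    [CompleteSpace A] {N : A → ℝ} {q Cp : ℝ} (h : QuasiBanachAlgebra A N q Cp) {x : A} {z : ℂ} :
    z ∈ spectrum ℂ x ↔ ∃ φ : A →ₐ[ℂ] ℂ, φ x = z := by
  constructor
  · intro hz
    have hN := h.isAlgebraQuasiSeminorm
    obtain ⟨φ, hφ⟩ := exists_algHom_apply_eq_zero_of_ringSeminorm hN.powerRadiusSeminorm
      hN.powerRadius_smul_le (fun _ => h.isUnit_one_sub) hz
    rw [map_sub, AlgHomClass.commutes, sub_eq_zero] at hφ
    exact ⟨φ, hφ.symm⟩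
  · rintro ⟨φ, rfl⟩
    exact AlgHom.apply_mem_spectrum φ x

end QuasiBanachAlgebra

/-- Gelfand theory in a commutative quasi-Banach algebra: `x` is invertible iff
`h(x) ≠ 0` for every complex homomorphism `h`; and `λ ∈ σ(x)` iff `h(x) = λ` for some
complex homomorphism `h`. -/
theorem gelfand_invertibility (A : Type*) [CommRing A] [Algebra ℂ A] [MetricSpace A]
    [CompleteSpace A] (N : A → ℝ) (q Cp : ℝ) [QuasiBanachAlgebra A N q Cp]
    (x : A) :
    (IsUnit x ↔
        ∀ φ : A →ₗ[ℂ] ℂ, (∀ a b, φ (a * b) = φ a * φ b) → φ ≠ 0 → φ x ≠ 0) ∧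
      ∀ lam : ℂ, (¬ IsUnit (algebraMap ℂ A lam - x) ↔
        ∃ φ : A →ₗ[ℂ] ℂ, (∀ a b, φ (a * b) = φ a * φ b) ∧ φ ≠ 0 ∧ φ x = lam) := by
  have hspec : ∀ z : ℂ, z ∈ spectrum ℂ x ↔
      ∃ φ : A →ₗ[ℂ] ℂ, (∀ a b, φ (a * b) = φ a * φ b) ∧ φ ≠ 0 ∧ φ x = z := fun z => by
    rw [QuasiBanachAlgebra.mem_spectrum_iff_exists_algHom (N := N) (q := q) (Cp := Cp)
      inferInstance, exists_algHom_apply_eq_iff]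
  refine ⟨?_, hspec⟩
  rw [← spectrum.zero_notMem_iff ℂ, hspec]
  push Not
  rfl
end

section
/- In a commutative quasi-Banach algebra A, every maximal ideal is the kernel of a complex homomorphism, and conversely the kernel of every complex homomorphism is a maximal ideal; moreover, x ∈ A is invertible if and only if x lies in no proper ideal of A. -/
/-!
Rescaling the `q`-th power of the quasi-norm gives a complete submultiplicative norm with
`‖c • x‖ = |c| ^ q * ‖x‖`. Its unit ball need not be convex, but the set `P` of elements with
polynomially growing powers is: in the binomial expansion of `(a • x + b • y) ^ n` with
`|a| + |b| ≤ 1` every coefficient has norm at most `1`, so only the number `n + 1` of terms is lost.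
Hence the gauge of `P` is a genuine submultiplicative seminorm. If the gauge of `x` is less than
`1`, then `x ^ n → 0`, so `1 - x ^ n` is invertible for some `n`, and so is its divisor `1 - x`. A
proper ideal therefore stays at gauge distance at least `1` from the unit, and the Banach algebra
obtained by completing the quotient is nonzero. By classical Gelfand theory it has a character.
-/

open Filter Finset Pointwise Topology UniformSpace

theorem gauge_mul_le {A : Type*} [NonUnitalNonAssocRing A] [Module ℝ A] [IsScalarTower ℝ A A]
    [SMulCommClass ℝ A A] {s : Set A} (habs : Absorbent ℝ s) (hmul : s * s ⊆ s) (x y : A) :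
    gauge s (x * y) ≤ gauge s x * gauge s y := by
  refine le_mul_of_forall_lt₀ fun a ha b hb => ?_
  obtain ⟨r, hr, hra, x, hx, rfl⟩ := exists_lt_of_gauge_lt habs ha
  obtain ⟨t, ht, htb, y, hy, rfl⟩ := exists_lt_of_gauge_lt habs hb
  have hxy : (r • x) * (t • y) ∈ (r * t) • s :=
    ⟨x * y, hmul (Set.mul_mem_mul hx hy), (smul_mul_smul_comm r x t y).symm⟩
  calc gauge s ((r • x) * (t • y)) ≤ r * t := gauge_le_of_mem (by positivity) hxy
    _ ≤ a * b := mul_le_mul hra.le htb.le ht.le (hr.trans hra).le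

theorem norm_pow_mul_pow_mul_choose_le_one {𝕜 : Type*} [NormedField 𝕜] {a b : 𝕜}
    (hab : ‖a‖ + ‖b‖ ≤ 1) {n k : ℕ} (hk : k ≤ n) :
    ‖a ^ k * b ^ (n - k) * (n.choose k : 𝕜)‖ ≤ 1 :=
  calc ‖a ^ k * b ^ (n - k) * (n.choose k : 𝕜)‖
      ≤ ‖a‖ ^ k * ‖b‖ ^ (n - k) * n.choose k := by
        rw [norm_mul, norm_mul, norm_pow, norm_pow]
        gcongr
        simpa using Nat.norm_cast_le (α := 𝕜) (n.choose k)
    _ ≤ (‖a‖ + ‖b‖) ^ n := by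
        rw [add_pow]
        exact single_le_sum (f := fun k => ‖a‖ ^ k * ‖b‖ ^ (n - k) * (n.choose k : ℝ))
          (fun _ _ => by positivity) (mem_range_succ_iff.2 hk)
    _ ≤ 1 := pow_le_one₀ (by positivity) hab

/-- The elements of a seminormed ring whose powers grow at most polynomially. This set replaces the
closed unit ball, which need not be convex when the norm is only `q`-homogeneous. -/
def polynomialGrowth (A : Type*) [SeminormedRing A] : Set A :=
  {x | ∃ (C : ℝ) (d : ℕ), ∀ n : ℕ, ‖x ^ n‖ ≤ C * (n + 1) ^ d}

namespace polynomialGrowth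

theorem mem_of_norm_le_one {A : Type*} [SeminormedRing A] {x : A} (hx : ‖x‖ ≤ 1) :
    x ∈ polynomialGrowth A := by
  refine ⟨‖(1 : A)‖ + 1, 0, fun n => ?_⟩
  rw [pow_zero, mul_one]
  rcases n.eq_zero_or_pos with rfl | hn
  · simp
  · calc ‖x ^ n‖ ≤ ‖x‖ ^ n := norm_pow_le' x hn
      _ ≤ 1 := pow_le_one₀ (norm_nonneg x) hx
      _ ≤ ‖(1 : A)‖ + 1 := le_add_of_nonneg_left (norm_nonneg _)

section Combination

variable {A : Type*} [SeminormedCommRing A]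

theorem mul_subset : polynomialGrowth A * polynomialGrowth A ⊆ polynomialGrowth A := by
  rintro _ ⟨x, ⟨C, d, hx⟩, y, ⟨D, e, hy⟩, rfl⟩
  refine ⟨C * D, d + e, fun n => ?_⟩
  calc ‖(x * y) ^ n‖ ≤ ‖x ^ n‖ * ‖y ^ n‖ := mul_pow x y n ▸ norm_mul_le _ _
    _ ≤ C * (n + 1) ^ d * (D * (n + 1) ^ e) :=
      mul_le_mul (hx n) (hy n) (norm_nonneg _) ((norm_nonneg _).trans (hx n))
    _ = C * D * (n + 1) ^ (d + e) := by ring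

variable {𝕜 : Type*} [NormedField 𝕜] [Algebra 𝕜 A] {q : ℝ}

theorem smul_add_smul_mem (hq : 0 ≤ q) (hsmul : ∀ (c : 𝕜) (x : A), ‖c • x‖ = ‖c‖ ^ q * ‖x‖)
    {a b : 𝕜} (hab : ‖a‖ + ‖b‖ ≤ 1) {x y : A} (hx : x ∈ polynomialGrowth A)
    (hy : y ∈ polynomialGrowth A) : a • x + b • y ∈ polynomialGrowth A := by
  obtain ⟨C, d, hx⟩ := hx
  obtain ⟨D, e, hy⟩ := hy
  have hC : 0 ≤ C := by simpa using (norm_nonneg _).trans (hx 0)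
  have hD : 0 ≤ D := by simpa using (norm_nonneg _).trans (hy 0)
  refine ⟨C * D, d + e + 1, fun n => ?_⟩
  have hterm : ∀ k ∈ range (n + 1), ‖(a • x) ^ k * (b • y) ^ (n - k) * (n.choose k : A)‖ ≤
      C * (n + 1) ^ d * (D * (n + 1) ^ e) := fun k hk => by
    have hkn : k ≤ n := mem_range_succ_iff.1 hk
    calc ‖(a • x) ^ k * (b • y) ^ (n - k) * (n.choose k : A)‖
        = ‖a ^ k * b ^ (n - k) * (n.choose k : 𝕜)‖ ^ q * ‖x ^ k * y ^ (n - k)‖ := by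
          rw [← hsmul, smul_pow, smul_pow, smul_mul_smul_comm, mul_comm _ (n.choose k : A),
            mul_comm _ (n.choose k : 𝕜), mul_smul (n.choose k : 𝕜), Nat.cast_smul_eq_nsmul,
            nsmul_eq_mul]
      _ ≤ 1 * ‖x ^ k * y ^ (n - k)‖ := by
          gcongr
          exact Real.rpow_le_one (norm_nonneg _) (norm_pow_mul_pow_mul_choose_le_one hab hkn) hq
      _ ≤ ‖x ^ k‖ * ‖y ^ (n - k)‖ := (one_mul _).trans_le (norm_mul_le _ _)
      _ ≤ C * (k + 1) ^ d * (D * (↑(n - k) + 1) ^ e) := by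
          gcongr
          exacts [hx k, hy (n - k)]
      _ ≤ C * (n + 1) ^ d * (D * (n + 1) ^ e) := by
          gcongr
          exact n.sub_le k
  calc ‖(a • x + b • y) ^ n‖
      ≤ ∑ k ∈ range (n + 1), C * (n + 1) ^ d * (D * (n + 1) ^ e) := by
        rw [add_pow]
        exact norm_sum_le_of_le _ hterm
    _ = C * D * (n + 1) ^ (d + e + 1) := by
        rw [sum_const, card_range, nsmul_eq_mul]
        push_cast
        ring

theorem balanced (hq : 0 ≤ q) (hsmul : ∀ (c : 𝕜) (x : A), ‖c • x‖ = ‖c‖ ^ q * ‖x‖) :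
    Balanced 𝕜 (polynomialGrowth A) :=
  balanced_iff_smul_mem.2 fun c hc x hx => by
    simpa using smul_add_smul_mem hq hsmul (b := (0 : 𝕜)) (by simpa using hc) hx hx

end Combination

section Real

variable {A : Type*} [SeminormedCommRing A] [Algebra ℝ A] {q : ℝ}

theorem convex (hq : 0 ≤ q) (hsmul : ∀ (c : ℝ) (x : A), ‖c • x‖ = ‖c‖ ^ q * ‖x‖) :
    Convex ℝ (polynomialGrowth A) := fun x hx y hy a b ha hb hab =>
  smul_add_smul_mem hq hsmul (by rw [Real.norm_of_nonneg ha, Real.norm_of_nonneg hb, hab]) hx hy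

theorem absorbent (hq : 0 < q) (hsmul : ∀ (c : ℝ) (x : A), ‖c • x‖ = ‖c‖ ^ q * ‖x‖) :
    Absorbent ℝ (polynomialGrowth A) := by
  refine absorbent_iff_eventually_nhdsNE_zero.2 fun x => ?_
  have hcont : Continuous fun c : ℝ => ‖c‖ ^ q * ‖x‖ :=
    (continuous_norm.rpow_const fun _ => .inr hq.le).mul_const _
  have hlim : Tendsto (fun c : ℝ => ‖c • x‖) (𝓝[≠] 0) (𝓝 0) := by
    simpa only [hsmul, norm_zero, Real.zero_rpow hq.ne', zero_mul] using
      (hcont.tendsto 0).mono_left nhdsWithin_le_nhds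
  filter_upwards [hlim.eventually_le_const one_pos] with c hc using mem_of_norm_le_one hc

theorem tendsto_pow_of_gauge_lt_one (hq : 0 < q)
    (hsmul : ∀ (c : ℝ) (x : A), ‖c • x‖ = ‖c‖ ^ q * ‖x‖) {x : A}
    (hx : gauge (polynomialGrowth A) x < 1) : Tendsto (x ^ ·) atTop (𝓝 0) := by
  have habs := absorbent hq hsmul
  obtain ⟨r, hr, hr1, y, ⟨C, d, hy⟩, rfl⟩ := exists_lt_of_gauge_lt habs hx
  have hrq : 0 < r ^ q := Real.rpow_pos_of_pos hr q
  have hlim : Tendsto (fun n : ℕ => C / r ^ q * ((↑(n + 1) : ℝ) ^ d * (r ^ q) ^ (n + 1)))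
      atTop (𝓝 0) := by
    simpa using ((tendsto_pow_const_mul_const_pow_of_lt_one d hrq.le
      (Real.rpow_lt_one hr.le hr1 hq)).comp (tendsto_add_atTop_nat 1)).const_mul (C / r ^ q)
  refine squeeze_zero_norm (fun n => ?_) hlim
  calc ‖(r • y) ^ n‖ = (r ^ q) ^ n * ‖y ^ n‖ := by
        rw [smul_pow, hsmul, norm_pow, Real.norm_of_nonneg hr.le, Real.rpow_pow_comm hr.le]
    _ ≤ (r ^ q) ^ n * (C * (n + 1) ^ d) := by
        gcongr
        exact hy n
    _ = C / r ^ q * ((↑(n + 1) : ℝ) ^ d * (r ^ q) ^ (n + 1)) := by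
        rw [pow_succ]
        push_cast
        field_simp

end Real

theorem isUnit_one_sub_of_gauge_lt_one {A : Type*} [NormedCommRing A] [CompleteSpace A]
    [Algebra ℝ A] {q : ℝ} (hq : 0 < q) (hsmul : ∀ (c : ℝ) (x : A), ‖c • x‖ = ‖c‖ ^ q * ‖x‖) {x : A}
    (hx : gauge (polynomialGrowth A) x < 1) : IsUnit (1 - x) := by
  obtain ⟨n, hn⟩ : ∃ n : ℕ, ‖x ^ n‖ < 1 := by
    simpa using ((tendsto_pow_of_gauge_lt_one hq hsmul hx).norm.eventually_lt_const
      (by simp : ‖(0 : A)‖ < 1)).exists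
  exact isUnit_of_dvd_unit (one_sub_dvd_one_sub_pow x n) (isUnit_one_sub_of_norm_lt_one hn)

end polynomialGrowth

theorem nonempty_algHom_complex_of_norm_one_ne_zero {A : Type*} [SeminormedCommRing A]
    [NormedAlgebra ℂ A] (h1 : ‖(1 : A)‖ ≠ 0) : Nonempty (A →ₐ[ℂ] ℂ) := by
  have : Nontrivial (Completion A) :=
    ⟨(1 : A), 0, fun h => h1 <| by rw [← Completion.norm_coe, h, norm_zero]⟩
  obtain ⟨χ⟩ : Nonempty (WeakDual.characterSpace ℂ (Completion A)) := inferInstance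
  let ι : A →ₐ[ℂ] Completion A := { Completion.coeRingHom with commutes' := fun _ => rfl }
  exact ⟨(WeakDual.CharacterSpace.toAlgHom χ).comp ι⟩

theorem exists_algHom_le_ker_of_one_le {A : Type*} [CommRing A] [Algebra ℂ A] (p : Seminorm ℂ A)
    (hmul : ∀ x y, p (x * y) ≤ p x * p y) {J : Ideal A} (hJ : ∀ x ∈ J, 1 ≤ p (1 - x)) :
    ∃ φ : A →ₐ[ℂ] ℂ, J ≤ RingHom.ker φ := by
  let p' : RingSeminorm A := { p with mul_le' := hmul }
  let _ : SeminormedCommRing A := { p'.toSeminormedRing, ‹CommRing A› with }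
  let _ : NormedAlgebra ℂ A :=
    { ‹Algebra ℂ A› with norm_smul_le := fun c x => (map_smul_eq_mul p c x).le }
  have h1 : ‖(1 : A ⧸ J)‖ ≠ 0 := fun h1 => by
    obtain ⟨y, hy, hlt⟩ := Ideal.Quotient.norm_mk_lt (1 : A ⧸ J) one_pos
    have hmem : 1 - y ∈ J := Ideal.Quotient.eq.1 (by rw [hy, map_one])
    have hle : 1 ≤ ‖y‖ := (hJ _ hmem).trans_eq (congrArg p (sub_sub_cancel 1 y))
    linarith
  obtain ⟨ψ⟩ := nonempty_algHom_complex_of_norm_one_ne_zero h1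
  refine ⟨ψ.comp (Ideal.Quotient.mkₐ ℂ J), fun x hx => ?_⟩
  simp [RingHom.mem_ker, Ideal.Quotient.eq_zero_iff_mem.2 hx]

theorem exists_algHom_le_ker_of_norm_smul_eq_rpow_mul {A : Type*} [NormedCommRing A]
    [CompleteSpace A] [Algebra ℂ A] {q : ℝ} (hq : 0 < q)
    (hsmul : ∀ (c : ℂ) (x : A), ‖c • x‖ = ‖c‖ ^ q * ‖x‖) {J : Ideal A} (hJ : J ≠ ⊤) :
    ∃ φ : A →ₐ[ℂ] ℂ, J ≤ RingHom.ker φ := by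
  have hsmulR (c : ℝ) (x : A) : ‖c • x‖ = ‖c‖ ^ q * ‖x‖ := by
    rw [← Complex.coe_smul, hsmul, Complex.norm_real]
  have habs := polynomialGrowth.absorbent hq hsmulR
  let p : Seminorm ℂ A := gaugeSeminorm (polynomialGrowth.balanced hq.le hsmul)
    (polynomialGrowth.convex hq.le hsmulR) habs
  refine exists_algHom_le_ker_of_one_le p (gauge_mul_le habs polynomialGrowth.mul_subset)
    fun x hx => not_lt.1 fun hlt => hJ <| J.eq_top_of_isUnit_mem hx ?_
  simpa using polynomialGrowth.isUnit_one_sub_of_gauge_lt_one hq hsmulR hlt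

theorem completeSpace_of_dist_eq_const_mul {X Y : Type*} [PseudoMetricSpace X]
    [PseudoMetricSpace Y] [CompleteSpace X] (e : X ≃ Y) {c : ℝ} (hc : 0 < c)
    (hdist : ∀ x y, dist (e x) (e y) = c * dist x y) : CompleteSpace Y := by
  let rescale : X →ᵈ Y := Dilation.mkOfDistEq e
    ⟨⟨c, hc.le⟩, fun h0 => hc.ne' (congrArg NNReal.toReal h0), hdist⟩
  exact ((Dilation.isUniformInducing rescale).completeSpace_congr e.surjective).1 ‹_›

namespace QuasiBanachAlgebra

variable {A : Type*} [MetricSpace A] [CompleteSpace A] {N : A → ℝ} {q Cp : ℝ}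

section Ring

variable [Ring A] [Algebra ℂ A]

theorem Cp_pos (h : QuasiBanachAlgebra A N q Cp) : 0 < Cp :=
  zero_lt_one.trans_le h.one_le_Cp

/-- The `q`-th power of the quasi-norm, rescaled by the constant `Cp` so as to be submultiplicative.
It defines the topology of the algebra, but is only `q`-homogeneous. -/
noncomputable def ringNorm (h : QuasiBanachAlgebra A N q Cp) : RingNorm A where
  toFun x := (Cp * N x) ^ q
  map_zero' := by rw [(h.eq_zero_iff 0).2 rfl, mul_zero, Real.zero_rpow h.q_pos.ne']
  add_le' x y := by
    have hCp := h.Cp_pos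
    simp only [Real.mul_rpow hCp.le (h.nonneg _), ← mul_add]
    gcongr
    exact h.add_pow_le x y
  neg' x := by simpa using congrArg (fun t => (Cp * t) ^ q) (h.smul_eq (-1) x)
  mul_le' x y := by
    have hCp := h.Cp_pos
    have hpos (z : A) : 0 ≤ Cp * N z := mul_nonneg hCp.le (h.nonneg z)
    rw [← Real.mul_rpow (hpos x) (hpos y)]
    refine Real.rpow_le_rpow (hpos _) ?_ h.q_pos.le
    calc Cp * N (x * y) ≤ Cp * (Cp * N x * N y) := by
          gcongr
          exact h.mul_le x y
      _ = Cp * N x * (Cp * N y) := by ring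
  eq_zero_of_map_eq_zero' x hx := by
    have hCp := h.Cp_pos
    rw [Real.rpow_eq_zero (mul_nonneg hCp.le (h.nonneg x)) h.q_pos.ne', mul_eq_zero,
      or_iff_right hCp.ne'] at hx
    exact (h.eq_zero_iff x).1 hx

theorem ringNorm_apply (h : QuasiBanachAlgebra A N q Cp) (x : A) :
    h.ringNorm x = (Cp * N x) ^ q :=
  rfl

theorem ringNorm_smul (h : QuasiBanachAlgebra A N q Cp) (c : ℂ) (x : A) :
    h.ringNorm (c • x) = ‖c‖ ^ q * h.ringNorm x := by
  rw [h.ringNorm_apply, h.ringNorm_apply, h.smul_eq, mul_left_comm,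
    Real.mul_rpow (norm_nonneg c) (mul_nonneg h.Cp_pos.le (h.nonneg x))]

theorem ringNorm_sub (h : QuasiBanachAlgebra A N q Cp) (x y : A) :
    h.ringNorm (x - y) = Cp ^ q * dist x y := by
  rw [h.ringNorm_apply, h.dist_eq, Real.mul_rpow h.Cp_pos.le (h.nonneg _)]

theorem completeSpace_ringNorm (h : QuasiBanachAlgebra A N q Cp) :
    @CompleteSpace A h.ringNorm.toNormedRing.toUniformSpace := by
  have hdist (x y : A) : h.ringNorm.toNormedRing.dist x y = Cp ^ q * dist x y := by
    rw [dist_comm, ← h.ringNorm_sub, sub_eq_neg_add]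
    exact h.ringNorm.toNormedRing.dist_eq x y
  exact @completeSpace_of_dist_eq_const_mul A A _ h.ringNorm.toNormedRing.toPseudoMetricSpace _
    (Equiv.refl A) _ (Real.rpow_pos_of_pos h.Cp_pos q) hdist

end Ring

theorem exists_algHom_le_ker [CommRing A] [Algebra ℂ A] (h : QuasiBanachAlgebra A N q Cp)
    {J : Ideal A} (hJ : J ≠ ⊤) : ∃ φ : A →ₐ[ℂ] ℂ, J ≤ RingHom.ker φ := by
  let _ : NormedCommRing A := { h.ringNorm.toNormedRing, ‹CommRing A› with }
  have : CompleteSpace A := h.completeSpace_ringNorm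
  exact exists_algHom_le_ker_of_norm_smul_eq_rpow_mul h.q_pos h.ringNorm_smul hJ

end QuasiBanachAlgebra

theorem exists_isMaximal_mem_iff_of_map_mul {K A : Type*} [Field K] [CommRing A] [Algebra K A]
    {φ : A →ₗ[K] K} (hmul : ∀ a b, φ (a * b) = φ a * φ b) (hφ : φ ≠ 0) :
    ∃ J : Ideal A, J.IsMaximal ∧ ∀ a, a ∈ J ↔ φ a = 0 := by
  obtain ⟨a, ha⟩ := DFunLike.ne_iff.1 hφ
  have hone : φ 1 = 1 := mul_left_cancel₀ ha (by rw [← hmul, mul_one, mul_one])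
  let ψ : A →ₐ[K] K := AlgHom.ofLinearMap φ hone hmul
  have hsurj : Function.Surjective ψ := fun c => ⟨algebraMap K A c, ψ.commutes c⟩
  exact ⟨RingHom.ker ψ, RingHom.ker_isMaximal_of_surjective ψ hsurj, fun _ => Iff.rfl⟩

theorem isUnit_iff_forall_ne_top_notMem {R : Type*} [CommSemiring R] {x : R} :
    IsUnit x ↔ ∀ J : Ideal R, J ≠ ⊤ → x ∉ J := by
  refine ⟨fun hx J hJ hxJ => hJ (J.eq_top_of_isUnit_mem hxJ hx), fun hx => ?_⟩
  by_contra hnu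
  exact hx _ (mt Ideal.span_singleton_eq_top.1 hnu) (Ideal.mem_span_singleton_self x)

/-- Maximal ideals in a commutative quasi-Banach algebra: every maximal ideal is the
kernel of a complex homomorphism, every complex homomorphism has maximal kernel, and
`x` is invertible iff it lies in no proper ideal. -/
theorem maximal_ideals_quasiBanach (A : Type*) [CommRing A] [Algebra ℂ A] [MetricSpace A]
    [CompleteSpace A] (N : A → ℝ) (q Cp : ℝ) [QuasiBanachAlgebra A N q Cp] :
    (∀ J : Ideal A, J.IsMaximal →
        ∃ φ : A →ₗ[ℂ] ℂ, (∀ a b, φ (a * b) = φ a * φ b) ∧ φ ≠ 0 ∧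
          ∀ a : A, a ∈ J ↔ φ a = 0) ∧
      (∀ φ : A →ₗ[ℂ] ℂ, (∀ a b, φ (a * b) = φ a * φ b) → φ ≠ 0 →
        ∃ J : Ideal A, J.IsMaximal ∧ ∀ a : A, a ∈ J ↔ φ a = 0) ∧
      ∀ x : A, IsUnit x ↔ ∀ J : Ideal A, J ≠ ⊤ → x ∉ J := by
  have h : QuasiBanachAlgebra A N q Cp := inferInstance
  refine ⟨fun J hJ => ?_, fun φ => exists_isMaximal_mem_iff_of_map_mul,
    fun x => isUnit_iff_forall_ne_top_notMem⟩
  obtain ⟨φ, hle⟩ := h.exists_algHom_le_ker hJ.ne_top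
  have hker : J = RingHom.ker φ := hJ.eq_of_le (RingHom.ker_ne_top φ) hle
  refine ⟨φ.toLinearMap, map_mul φ, fun h0 => ?_, fun a => by rw [hker]; rfl⟩
  simpa using LinearMap.congr_fun h0 1
end
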